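/- The ten functions D_δ (δ ranging over the ten even characteristics) are linearly independent over ℂ; equivalently, the ℂ-linear span of {D_δ₁, …, D_δ₁₀} has dimension exactly 10. -/

import Mathlib

open scoped BigOperators

namespace TwoLoop

/-- 2×2 complex matrices. -/
abbrev Mat2 := Matrix (Fin 2) (Fin 2) ℂ

/-- The genus-2 Siegel upper half space: symmetric 2×2 complex matrices with
positive definite imaginary part. -/
def SiegelH2 : Set Mat2 := {τ | τ.transpose = τ ∧ (τ.map Complex.im).PosDef}

/-- A (half-integer) theta characteristic `[a;b]`, recorded by its rows `a, b ∈ {0,1}²`. -/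
abbrev Char := (Fin 2 → ℤ) × (Fin 2 → ℤ)

/-- The theta constant `θ[a;b](τ) = Σ_{n ∈ ℤ²} exp(πi (n+a/2)ᵀ τ (n+a/2) + πi (n+a/2)·b)`. -/
noncomputable def theta (κ : Char) (τ : Mat2) : ℂ :=
  ∑' n : Fin 2 → ℤ,
    Complex.exp ((Real.pi : ℂ) * Complex.I *
      ((∑ i, ∑ j, ((n i : ℂ) + (κ.1 i : ℂ) / 2) * τ i j * ((n j : ℂ) + (κ.1 j : ℂ) / 2))
        + ∑ i, ((n i : ℂ) + (κ.1 i : ℂ) / 2) * (κ.2 i : ℂ)))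

/-- The ten even characteristics δ₁,…,δ₁₀. -/
def δev : Fin 10 → Char :=
  ![(![0,0], ![0,0]), (![0,0], ![0,1]), (![0,0], ![1,0]), (![0,0], ![1,1]),
    (![0,1], ![0,0]), (![0,1], ![1,0]), (![1,0], ![0,0]), (![1,0], ![0,1]),
    (![1,1], ![0,0]), (![1,1], ![1,1])]

/-- The six odd characteristics ν₁,…,ν₆. -/
def νodd : Fin 6 → Char :=
  ![(![0,1], ![0,1]), (![1,0], ![1,0]), (![0,1], ![1,1]),
    (![1,0], ![1,1]), (![1,1], ![0,1]), (![1,1], ![1,0])]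

/-- `Θ[ε](τ) = θ[ε;0](2τ)`. -/
noncomputable def Θf (ε : Fin 2 → ℤ) (τ : Mat2) : ℂ := theta (ε, ![0,0]) ((2 : ℂ) • τ)

noncomputable def P0 (τ : Mat2) : ℂ :=
  Θf ![0,0] τ ^ 4 + Θf ![0,1] τ ^ 4 + Θf ![1,0] τ ^ 4 + Θf ![1,1] τ ^ 4
noncomputable def P1 (τ : Mat2) : ℂ :=
  2 * (Θf ![0,0] τ ^ 2 * Θf ![0,1] τ ^ 2 + Θf ![1,0] τ ^ 2 * Θf ![1,1] τ ^ 2)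
noncomputable def P2 (τ : Mat2) : ℂ :=
  2 * (Θf ![0,0] τ ^ 2 * Θf ![1,0] τ ^ 2 + Θf ![0,1] τ ^ 2 * Θf ![1,1] τ ^ 2)
noncomputable def P3 (τ : Mat2) : ℂ :=
  2 * (Θf ![0,0] τ ^ 2 * Θf ![1,1] τ ^ 2 + Θf ![0,1] τ ^ 2 * Θf ![1,0] τ ^ 2)
noncomputable def P4 (τ : Mat2) : ℂ :=
  4 * (Θf ![0,0] τ * Θf ![0,1] τ * Θf ![1,0] τ * Θf ![1,1] τ)

/-- The vector `(P₀,…,P₄)`. -/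
noncomputable def Pv : Fin 5 → Mat2 → ℂ := ![P0, P1, P2, P3, P4]

open MvPolynomial in
/-- The Igusa quartic as a polynomial in `x₀,…,x₄`. -/
noncomputable def I4poly : MvPolynomial (Fin 5) ℂ :=
  X 4 ^ 4 + X 4 ^ 2 * X 0 ^ 2 - X 4 ^ 2 * X 1 ^ 2 - X 4 ^ 2 * X 2 ^ 2 - X 4 ^ 2 * X 3 ^ 2
    + X 1 ^ 2 * X 2 ^ 2 + X 1 ^ 2 * X 3 ^ 2 + X 2 ^ 2 * X 3 ^ 2
    - 2 * (X 0 * X 1 * X 2 * X 3)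

/-- The signature `⟨κ|λ⟩ = exp(πi(a_κ·b_λ − b_κ·a_λ))`. -/
noncomputable def sig (κ lam : Char) : ℂ :=
  Complex.exp ((Real.pi : ℂ) * Complex.I *
    (((∑ i, κ.1 i * lam.2 i : ℤ) : ℂ) - ((∑ i, κ.2 i * lam.1 i : ℤ) : ℂ)))

/-- Componentwise mod-2 sum of characteristics. -/
def addChar (κ lam : Char) : Char :=
  (fun i => (κ.1 i + lam.1 i) % 2, fun i => (κ.2 i + lam.2 i) % 2)

/-- For each even characteristic `δ_d`, the ordering `(k₁,…,k₆)` of `{1,…,6}` (0-indexed) whose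
first three entries form the triad of odd characteristics with `δ_d = ν_{k₁}+ν_{k₂}+ν_{k₃}`
and whose last three are the complementary indices. -/
def triad : Fin 10 → Fin 6 → Fin 6 :=
  ![![0,3,5,1,2,4], ![0,1,5,2,3,4], ![0,1,4,2,3,5], ![0,3,4,1,2,5], ![0,1,3,2,4,5],
    ![0,4,5,1,2,3], ![0,1,2,3,4,5], ![0,2,3,1,4,5], ![0,2,5,1,3,4], ![0,2,4,1,3,5]]

/-- D'Hoker–Phong's `Ξ₆[δ]`. -/
noncomputable def Xi6 (d : Fin 10) (τ : Mat2) : ℂ :=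
  ∑ i : Fin 3, ∑ j : Fin 3,
    if i < j then
      sig (νodd (triad d (Fin.castLE (by norm_num) i))) (νodd (triad d (Fin.castLE (by norm_num) j))) *
        ∏ m : Fin 3,
          theta (addChar (addChar (νodd (triad d (Fin.castLE (by norm_num) i)))
              (νodd (triad d (Fin.castLE (by norm_num) j))))
            (νodd (triad d (⟨m.1 + 3, by omega⟩ : Fin 6)))) τ ^ 4
    else 0

/-- The formal derivative `∂I₄/∂θ⁴[δ]` of the Igusa quartic with respect to the ten fourth
powers of the even theta constants, regarded as independent variables. -/
noncomputable def Dd (d : Fin 10) (τ : Mat2) : ℂ :=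
  (1 / 48 : ℂ) *
    (theta (δev d) τ ^ 4 * (∑ d' : Fin 10, theta (δev d') τ ^ 8) - 4 * theta (δev d) τ ^ 12)

/-- `f_δ = 2Ξ₆[δ] − ∂I₄/∂θ⁴[δ]`. -/
noncomputable def fδ (d : Fin 10) (τ : Mat2) : ℂ := 2 * Xi6 d τ - Dd d τ

/-- `Ψ₆`, the weight-6 modular form. -/
noncomputable def Ψ6 (τ : Mat2) : ℂ :=
  P0 τ ^ 3 - 9 * P0 τ * (P1 τ ^ 2 + P2 τ ^ 2 + P3 τ ^ 2 - 4 * P4 τ ^ 2)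
    + 54 * (P1 τ * P2 τ * P3 τ)

/-- `Ψ₁₀`, the weight-10 modular form. -/
noncomputable def Ψ10 (τ : Mat2) : ℂ := ∏ d : Fin 10, theta (δev d) τ ^ 2

/-- A characteristic is even when `a·b` is even. -/
def IsEvenChar (κ : Char) : Prop := (∑ i, κ.1 i * κ.2 i) % 2 = 0

/-- A characteristic is odd when `a·b` is odd. -/
def IsOddChar (κ : Char) : Prop := (∑ i, κ.1 i * κ.2 i) % 2 = 1

/-!
By Riemann's addition formula `θ²[δ]` is a quadratic form in the four second-order theta constants
`Θ[ε]`, so `48 D_δ` is the value at `(Θ[ε])` of an explicit form of degree `12` in four variables.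
No nonzero form in four variables vanishes at all `(Θ[ε](τ))`: on the ray `τ = (2 / π) i s Y`, where
`Y` is the Gram matrix of `x² + b y² + b² (x + y)²`, each `Θ[ε]` decays like `exp (-s w(ε))`, where
`w(ε)` is the minimum of that quadratic form on the residue class `ε` mod `2`; for `b` large these
weights separate the monomials of a given degree as digits in base `b`, so the one of least weight
dominates as `s → ∞`. A linear relation between the `D_δ` is therefore one between the ten forms of
degree `12`, and its coefficients are seen to vanish by evaluating the forms at ten points.
-/

section ThetaSeries

open Matrix MatrixOrder in
lemma exists_pos_forall_mul_dotProduct_self_le {ι : Type*} [Fintype ι] [Nonempty ι]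
    {Y : Matrix ι ι ℝ} (hY : Y.PosDef) :
    ∃ c > 0, ∀ x : ι → ℝ, c * (x ⬝ᵥ x) ≤ x ⬝ᵥ Y *ᵥ x := by
  classical
  obtain ⟨c, hc, hcY⟩ := (CFC.exists_pos_algebraMap_le_iff hY.isHermitian.isSelfAdjoint).2
    fun _ hx => hY.isStrictlyPositive.spectrum_pos hx
  refine ⟨c, hc, fun x => ?_⟩
  have h := (Matrix.le_iff.1 hcY).dotProduct_mulVec_nonneg x
  simp only [Algebra.algebraMap_eq_smul_one, sub_mulVec, smul_mulVec, one_mulVec,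
    dotProduct_sub, dotProduct_smul, smul_eq_mul, star_trivial] at h
  linarith

lemma summable_exp_neg_mul_sq {c : ℝ} (hc : 0 < c) (a : ℝ) :
    Summable fun n : ℤ => Real.exp (-Real.pi * (c * (n + a) ^ 2)) := by
  have h := ((summable_jacobiTheta₂_term_iff (Complex.I * ((c * a : ℝ) : ℂ)) (Complex.I * c)).2
    (by simpa using hc)).norm.mul_right (Real.exp (-Real.pi * (c * a ^ 2)))
  refine h.congr fun n => ?_
  rw [norm_jacobiTheta₂_term, ← Real.exp_add]
  congr 1
  simp only [Complex.mul_im, Complex.I_re, Complex.I_im, Complex.ofReal_re, Complex.ofReal_im]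
  ring

/-- The `n`-th term of the series defining `theta κ τ`. -/
noncomputable def thetaTerm (κ : Char) (τ : Mat2) (n : Fin 2 → ℤ) : ℂ :=
  Complex.exp ((Real.pi : ℂ) * Complex.I *
    ((∑ i, ∑ j, ((n i : ℂ) + (κ.1 i : ℂ) / 2) * τ i j * ((n j : ℂ) + (κ.1 j : ℂ) / 2))
      + ∑ i, ((n i : ℂ) + (κ.1 i : ℂ) / 2) * (κ.2 i : ℂ)))

open Matrix in
lemma norm_thetaTerm (κ : Char) (τ : Mat2) (n : Fin 2 → ℤ) :
    ‖thetaTerm κ τ n‖ = Real.exp (-Real.pi *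
      ((fun i => (n i + κ.1 i / 2 : ℝ)) ⬝ᵥ τ.map Complex.im *ᵥ fun i => n i + κ.1 i / 2)) := by
  rw [thetaTerm, Complex.norm_exp]
  congr 1
  simp only [dotProduct, mulVec, map_apply, Fin.sum_univ_two, Complex.mul_re, Complex.mul_im,
    Complex.add_re, Complex.add_im, Complex.I_re, Complex.I_im, Complex.ofReal_re,
    Complex.ofReal_im, Complex.intCast_re, Complex.intCast_im, Complex.div_ofNat_re,
    Complex.div_ofNat_im]
  ring

lemma summable_norm_thetaTerm {τ : Mat2} (hτ : τ ∈ SiegelH2) (κ : Char) :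
    Summable fun n => ‖thetaTerm κ τ n‖ := by
  obtain ⟨c, hc, hcτ⟩ := exists_pos_forall_mul_dotProduct_self_le hτ.2
  have hprod : Summable fun n : Fin 2 → ℤ =>
      Real.exp (-Real.pi * (c * (n 0 + κ.1 0 / 2) ^ 2)) *
        Real.exp (-Real.pi * (c * (n 1 + κ.1 1 / 2) ^ 2)) :=
    (finTwoArrowEquiv ℤ).summable_iff.2 <| (summable_exp_neg_mul_sq hc _).mul_of_nonneg
      (summable_exp_neg_mul_sq hc _) (fun _ => (Real.exp_pos _).le) fun _ => (Real.exp_pos _).le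
  refine .of_nonneg_of_le (fun _ => norm_nonneg _) (fun n => ?_) hprod
  rw [norm_thetaTerm, ← Real.exp_add, Real.exp_le_exp]
  have h := mul_le_mul_of_nonneg_left (hcτ fun i => n i + κ.1 i / 2) Real.pi_pos.le
  rw [dotProduct, Fin.sum_univ_two] at h
  linarith

lemma smul_mem_SiegelH2 {τ : Mat2} (hτ : τ ∈ SiegelH2) {r : ℝ} (hr : 0 < r) :
    (r : ℂ) • τ ∈ SiegelH2 := by
  refine ⟨by rw [Matrix.transpose_smul, hτ.1], ?_⟩
  convert hτ.2.smul hr using 1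
  ext i j
  simp

end ThetaSeries

section AdditionFormula

/-- The representative in `{0,1}²` of a vector of residues mod `2`. -/
def zeroOneLift (ε : Fin 2 → ZMod 2) : Fin 2 → ℤ := fun i => ((ε i).val : ℤ)

/-- The change of summation variables `(ε, k, l) ↦ (k + l + ε, k - l)` in a product of two theta
series: a pair of integer vectors is determined by the residue `ε` of its difference mod `2`, its
half-sum and its half-difference. -/
def halfSumDiffEquiv :
    (Fin 2 → ZMod 2) × (Fin 2 → ℤ) × (Fin 2 → ℤ) ≃ (Fin 2 → ℤ) × (Fin 2 → ℤ) where
  toFun x := (x.2.1 + x.2.2 + zeroOneLift x.1, x.2.1 - x.2.2)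
  invFun x := (fun i => ((x.1 i - x.2 i : ℤ) : ZMod 2),
    fun i => x.2 i + (x.1 i - x.2 i) / 2, fun i => (x.1 i - x.2 i) / 2)
  left_inv := by
    rintro ⟨ε, k, l⟩
    have hval (i : Fin 2) : (ε i).val < 2 := ZMod.val_lt _
    ext i
    · have htwo : (2 : ZMod 2) = 0 := rfl
      simp only [zeroOneLift, Pi.add_apply, Pi.sub_apply, Int.cast_sub, Int.cast_add,
        Int.cast_natCast, ZMod.natCast_zmod_val]
      linear_combination (l i : ZMod 2) * htwo
    · have := hval i
      simp only [zeroOneLift, Pi.add_apply, Pi.sub_apply]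
      omega
    · have := hval i
      simp only [zeroOneLift, Pi.add_apply, Pi.sub_apply]
      omega
  right_inv := by
    rintro ⟨m, n⟩
    ext i
    · simp only [zeroOneLift, Pi.add_apply, ZMod.val_intCast]
      omega
    · simp

lemma thetaTerm_mul_thetaTerm (κ : Char) (τ : Mat2) (ε : Fin 2 → ZMod 2) (k l : Fin 2 → ℤ) :
    thetaTerm κ τ (k + l + zeroOneLift ε) * thetaTerm κ τ (k - l) =
      (-1) ^ (∑ i, (κ.1 i + zeroOneLift ε i) * κ.2 i) *
        (thetaTerm (κ.1 + zeroOneLift ε, ![0, 0]) ((2 : ℂ) • τ) k *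
          thetaTerm (zeroOneLift ε, ![0, 0]) ((2 : ℂ) • τ) l) := by
  have hsign : (-1 : ℂ) ^ (∑ i, (κ.1 i + zeroOneLift ε i) * κ.2 i) =
      Complex.exp ((∑ i, (κ.1 i + zeroOneLift ε i) * κ.2 i + ∑ i, 2 * (k i * κ.2 i) : ℤ) *
        (Real.pi * Complex.I)) := by
    rw [Complex.exp_int_mul, Complex.exp_pi_mul_I, zpow_add₀ (by norm_num), ← Finset.mul_sum,
      (even_two_mul _).neg_one_zpow, mul_one]
  rw [hsign]
  simp only [thetaTerm, ← Complex.exp_add, Fin.sum_univ_two]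
  congr 1
  simp only [Pi.add_apply, Pi.sub_apply, Matrix.smul_apply, smul_eq_mul, Matrix.cons_val]
  push_cast
  ring

theorem theta_sq_eq_sum {τ : Mat2} (hτ : τ ∈ SiegelH2) (κ : Char) :
    theta κ τ ^ 2 = ∑ ε : Fin 2 → ZMod 2, (-1) ^ (∑ i, (κ.1 i + zeroOneLift ε i) * κ.2 i) *
      (Θf (κ.1 + zeroOneLift ε) τ * Θf (zeroOneLift ε) τ) := by
  have hs := summable_norm_thetaTerm hτ κ
  have hs₂ := summable_norm_thetaTerm (τ := (2 : ℂ) • τ)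
    (by simpa using smul_mem_SiegelH2 hτ two_pos)
  have hprod : Summable fun x => thetaTerm κ τ (halfSumDiffEquiv x).1 *
      thetaTerm κ τ (halfSumDiffEquiv x).2 :=
    halfSumDiffEquiv.summable_iff.2 (summable_mul_of_summable_norm hs hs)
  calc theta κ τ ^ 2
    _ = ∑' x : (Fin 2 → ℤ) × (Fin 2 → ℤ), thetaTerm κ τ x.1 * thetaTerm κ τ x.2 := by
        rw [sq, ← tsum_mul_tsum_of_summable_norm hs hs]
        rfl
    _ = ∑ ε, ∑' x : (Fin 2 → ℤ) × (Fin 2 → ℤ), thetaTerm κ τ (x.1 + x.2 + zeroOneLift ε) *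
          thetaTerm κ τ (x.1 - x.2) := by
        rw [← halfSumDiffEquiv.tsum_eq, hprod.tsum_prod, tsum_fintype]
        rfl
    _ = _ := by
        refine Finset.sum_congr rfl fun ε _ => ?_
        simp only [thetaTerm_mul_thetaTerm, tsum_mul_left]
        rw [← tsum_mul_tsum_of_summable_norm (hs₂ _) (hs₂ _)]
        rfl

lemma Θf_congr {a b : Fin 2 → ℤ} (hab : ∀ i, (a i : ZMod 2) = b i) (τ : Mat2) :
    Θf a τ = Θf b τ := by
  have hdvd (i : Fin 2) : (2 : ℤ) ∣ b i - a i :=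
    (ZMod.intCast_eq_intCast_iff_dvd_sub _ _ 2).1 (hab i)
  choose c hc using hdvd
  obtain rfl : b = a + 2 • c := by
    ext i
    simp [← hc]
  refine ((Equiv.addRight c).tsum_eq (thetaTerm (a, ![0, 0]) ((2 : ℂ) • τ))).symm.trans ?_
  refine tsum_congr fun n => ?_
  simp only [thetaTerm, Equiv.coe_addRight, Pi.add_apply, Pi.smul_apply]
  congr 1
  simp only [Fin.sum_univ_two, Matrix.smul_apply, smul_eq_mul, nsmul_eq_mul, Matrix.cons_val]
  push_cast
  ring

end AdditionFormula

section GradientPolynomials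

open MvPolynomial

/-- The four second-order theta constants `Θ[ε](τ)`, indexed by residues mod `2`. -/
noncomputable def secondOrder (τ : Mat2) (ε : Fin 2 → ZMod 2) : ℂ := Θf (zeroOneLift ε) τ

/-- The quadratic polynomial expressing `θ[κ]²` in the second-order theta constants. -/
noncomputable def thetaSqPoly (κ : Char) : MvPolynomial (Fin 2 → ZMod 2) ℂ :=
  ∑ ε, C ((-1) ^ (∑ i, (κ.1 i + zeroOneLift ε i) * κ.2 i)) * (X (fun i => κ.1 i + ε i) * X ε)

lemma isHomogeneous_thetaSqPoly (κ : Char) : (thetaSqPoly κ).IsHomogeneous 2 :=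
  .sum _ _ _ fun _ _ => ((isHomogeneous_X _ _).mul (isHomogeneous_X _ _)).C_mul _

lemma eval_secondOrder_thetaSqPoly {τ : Mat2} (hτ : τ ∈ SiegelH2) (κ : Char) :
    eval (secondOrder τ) (thetaSqPoly κ) = theta κ τ ^ 2 := by
  have hreduce (ε : Fin 2 → ZMod 2) :
      Θf (zeroOneLift fun i => κ.1 i + ε i) τ = Θf (κ.1 + zeroOneLift ε) τ :=
    Θf_congr (fun i => by simp [zeroOneLift]) τ
  simp only [thetaSqPoly, map_sum, map_mul, eval_C, eval_X, secondOrder, hreduce,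
    theta_sq_eq_sum hτ]

/-- The gradient of `192⁻¹ ((∑ uᵢ²)² - 4 ∑ uᵢ⁴)`, the Igusa quartic in the variables `θ⁴[δ]`,
cleared of the common factor `48⁻¹`. -/
def igusaGradient {ι R : Type*} [Fintype ι] [CommRing R] (u : ι → R) (i : ι) : R :=
  u i * ∑ j, u j ^ 2 - 4 * u i ^ 3

lemma map_igusaGradient {ι R S : Type*} [Fintype ι] [CommRing R] [CommRing S] (φ : R →+* S)
    (u : ι → R) (i : ι) : φ (igusaGradient u i) = igusaGradient (fun j => φ (u j)) i := by
  simp [igusaGradient, map_ofNat φ 4]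

/-- The polynomial of degree `12` expressing `48 D_δ` in the second-order theta constants. -/
noncomputable def gradientPoly (d : Fin 10) : MvPolynomial (Fin 2 → ZMod 2) ℂ :=
  igusaGradient (fun d => thetaSqPoly (δev d) ^ 2) d

lemma isHomogeneous_gradientPoly (d : Fin 10) : (gradientPoly d).IsHomogeneous 12 := by
  have hpow (d : Fin 10) (n : ℕ) : ((thetaSqPoly (δev d) ^ 2) ^ n).IsHomogeneous (2 * 2 * n) :=
    ((isHomogeneous_thetaSqPoly _).pow 2).pow n
  have hcube := (hpow d 3).C_mul 4
  rw [map_ofNat] at hcube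
  exact ((isHomogeneous_thetaSqPoly _).pow 2 |>.mul (.sum _ _ _ fun j _ => hpow j 2)).sub hcube

lemma eval_secondOrder_gradientPoly {τ : Mat2} (hτ : τ ∈ SiegelH2) (d : Fin 10) :
    eval (secondOrder τ) (gradientPoly d) = 48 * Dd d τ := by
  rw [gradientPoly, map_igusaGradient]
  simp only [map_pow, eval_secondOrder_thetaSqPoly hτ, igusaGradient, Dd, ← pow_mul]
  ring

end GradientPolynomials

section Degeneration

open Filter Topology

lemma tendsto_tsum_exp_neg_mul {ι : Type*} {E : ι → ℝ} (hE : ∀ i, 0 ≤ E i)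
    (hsum : Summable fun i => Real.exp (-E i)) :
    Tendsto (fun s : ℝ => ∑' i, Real.exp (-(s * E i))) atTop (𝓝 (Nat.card {i // E i = 0})) := by
  have hlim : ∑' i, Set.indicator {i | E i = 0} (fun _ => (1 : ℝ)) i = Nat.card {i // E i = 0} := by
    rw [← tsum_subtype, tsum_const, nsmul_one]
    rfl
  rw [← hlim]
  refine tendsto_tsum_of_dominated_convergence hsum (fun i => ?_) ?_
  · rcases (hE i).eq_or_lt with hi | hi
    · simp [← hi]
    · rw [Set.indicator_of_notMem (by simpa using hi.ne')]
      exact Real.tendsto_exp_neg_atTop_nhds_zero.comp (tendsto_id.atTop_mul_const hi)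
  · filter_upwards [eventually_ge_atTop 1] with s hs i
    rw [Real.norm_of_nonneg (Real.exp_pos _).le, Real.exp_le_exp, neg_le_neg_iff]
    exact le_mul_of_one_le_left (hE i) hs

lemma card_zeros_pos {ι : Type*} {E : ι → ℝ} (hsum : Summable fun i => Real.exp (-E i)) {i₀ : ι}
    (hi₀ : E i₀ = 0) : 0 < Nat.card {i // E i = 0} := by
  have hfin : {i | ¬ Real.exp (-E i) < 1}.Finite :=
    hsum.tendsto_cofinite_zero.eventually_lt_const one_pos
  have : Finite {i // E i = 0} := (hfin.subset fun i (hi : E i = 0) => by simp [hi]).to_subtype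
  have : Nonempty {i // E i = 0} := ⟨i₀, hi₀⟩
  exact Nat.card_pos

/-- The binary quadratic form `α x₀² + β x₁² + γ (x₀ + x₁)²` with Selling parameters
`α, β, γ`. -/
def sellingForm (α β γ : ℝ) (x : Fin 2 → ℝ) : ℝ :=
  α * x 0 ^ 2 + β * x 1 ^ 2 + γ * (x 0 + x 1) ^ 2

/-- The point of the Siegel space at height `s` on the ray of a Selling form; the factor `2 / π`
makes the terms of the second-order theta series `exp (-s q(m))`. -/
noncomputable def sellingPoint (α β γ s : ℝ) : Mat2 :=
  ((2 / Real.pi * s : ℝ) : ℂ) • Complex.I • (!![α + γ, γ; γ, β + γ] : Matrix _ _ ℝ).map (↑)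

lemma sellingPoint_mem {α β γ s : ℝ} (hα : 0 < α) (hβ : 0 < β) (hγ : 0 < γ) (hs : 0 < s) :
    sellingPoint α β γ s ∈ SiegelH2 := by
  refine smul_mem_SiegelH2 ⟨?_, .of_dotProduct_mulVec_pos ?_ fun x hx => ?_⟩ (by positivity)
  · ext i j
    fin_cases i <;> fin_cases j <;> simp
  · ext i j
    fin_cases i <;> fin_cases j <;> simp
  · have hform : 0 < sellingForm α β γ x := by
      obtain ⟨i, hi⟩ := Function.ne_iff.1 hx
      rw [sellingForm]
      fin_cases i
      · have : 0 < x 0 ^ 2 := sq_pos_of_ne_zero hi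
        positivity
      · have : 0 < x 1 ^ 2 := sq_pos_of_ne_zero hi
        positivity
    refine hform.trans_eq ?_
    simp only [sellingForm, Matrix.mulVec, dotProduct, Fin.sum_univ_two, Pi.star_apply,
      star_trivial, Matrix.map_apply, Matrix.smul_apply, Matrix.of_apply, Matrix.cons_val,
      smul_eq_mul, Complex.I_mul_im, Complex.ofReal_re]
    ring

lemma thetaTerm_sellingPoint (α β γ s : ℝ) (a n : Fin 2 → ℤ) :
    thetaTerm (a, ![0, 0]) ((2 : ℂ) • sellingPoint α β γ s) n =
      (Real.exp (-(s * sellingForm α β γ fun i => 2 * n i + a i)) : ℝ) := by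
  have hπ : (Real.pi : ℂ) ≠ 0 := Complex.ofReal_ne_zero.2 Real.pi_ne_zero
  rw [thetaTerm, Complex.ofReal_exp]
  congr 1
  simp only [sellingPoint, sellingForm, Fin.sum_univ_two, Matrix.map_apply, Matrix.smul_apply,
    Matrix.of_apply, Matrix.cons_val, smul_eq_mul, Int.cast_zero, mul_zero, add_zero]
  push_cast
  field_simp
  linear_combination (s * (α * (2 * n 0 + a 0) ^ 2 + β * (2 * n 1 + a 1) ^ 2 +
    γ * (2 * n 0 + a 0 + (2 * n 1 + a 1)) ^ 2) : ℂ) * Complex.I_sq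

/-- The minimum of the Selling form on the integer vectors in the residue class `ε` mod `2`. -/
def sellingWeight (α β γ : ℝ) (ε : Fin 2 → ZMod 2) : ℝ :=
  α * (ε 0).val + β * (ε 1).val + γ * (ε 0 + ε 1).val

lemma val_intCast_zmod_two_le_sq (m : ℤ) : ((m : ZMod 2).val : ℝ) ≤ (m : ℝ) ^ 2 := by
  have h : ((m : ZMod 2).val : ℤ) ≤ m ^ 2 := by
    rw [ZMod.val_intCast, Nat.cast_ofNat]
    rcases eq_or_ne m 0 with rfl | hm
    · simp
    · have := Int.emod_lt_of_pos m two_pos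
      have := sq_pos_of_ne_zero hm
      omega
  exact_mod_cast h

lemma sellingWeight_le_sellingForm {α β γ : ℝ} (hα : 0 ≤ α) (hβ : 0 ≤ β) (hγ : 0 ≤ γ)
    (ε : Fin 2 → ZMod 2) (n : Fin 2 → ℤ) :
    sellingWeight α β γ ε ≤ sellingForm α β γ fun i => 2 * n i + zeroOneLift ε i := by
  have hcast (i : Fin 2) : ((2 * n i + zeroOneLift ε i : ℤ) : ZMod 2) = ε i := by
    have htwo : (2 : ZMod 2) = 0 := rfl
    simp [zeroOneLift, htwo]
  have h₀ := val_intCast_zmod_two_le_sq (2 * n 0 + zeroOneLift ε 0)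
  have h₁ := val_intCast_zmod_two_le_sq (2 * n 1 + zeroOneLift ε 1)
  have h₂ := val_intCast_zmod_two_le_sq ((2 * n 0 + zeroOneLift ε 0) + (2 * n 1 + zeroOneLift ε 1))
  rw [Int.cast_add, hcast, hcast] at h₂
  rw [hcast] at h₀ h₁
  push_cast at h₀ h₁ h₂
  unfold sellingWeight sellingForm
  gcongr

lemma exists_sellingForm_eq_sellingWeight (α β γ : ℝ) (ε : Fin 2 → ZMod 2) :
    ∃ n : Fin 2 → ℤ,
      sellingForm α β γ (fun i => 2 * n i + zeroOneLift ε i) = sellingWeight α β γ ε := by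
  have hcases : ∀ x : ZMod 2, x = 0 ∨ x = 1 := by decide
  have hone : (1 : ZMod 2).val = 1 := rfl
  have htwo : (1 + 1 : ZMod 2).val = 0 := rfl
  refine ⟨![0, -((ε 0).val * (ε 1).val)], ?_⟩
  rcases hcases (ε 0) with h₀ | h₀ <;> rcases hcases (ε 1) with h₁ | h₁ <;>
    simp only [sellingForm, sellingWeight, zeroOneLift, h₀, h₁, hone, htwo, ZMod.val_zero,
      add_zero, zero_add, Matrix.cons_val] <;>
    norm_num

theorem exists_tendsto_secondOrder_sellingPoint {α β γ : ℝ} (hα : 0 < α) (hβ : 0 < β)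
    (hγ : 0 < γ) (ε : Fin 2 → ZMod 2) :
    ∃ c : ℂ, c ≠ 0 ∧ Tendsto (fun s : ℝ => (Real.exp (s * sellingWeight α β γ ε) : ℂ) *
      secondOrder (sellingPoint α β γ s) ε) atTop (𝓝 c) := by
  set E : (Fin 2 → ℤ) → ℝ := fun n =>
    sellingForm α β γ (fun i => 2 * n i + zeroOneLift ε i) - sellingWeight α β γ ε
  have hE (n) : 0 ≤ E n := sub_nonneg.2 (sellingWeight_le_sellingForm hα.le hβ.le hγ.le ε n)
  have hterm (s : ℝ) (n) : (Real.exp (s * sellingWeight α β γ ε) : ℂ) *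
      thetaTerm (zeroOneLift ε, ![0, 0]) ((2 : ℂ) • sellingPoint α β γ s) n =
        (Real.exp (-(s * E n)) : ℝ) := by
    rw [thetaTerm_sellingPoint, ← Complex.ofReal_mul, ← Real.exp_add]
    congr 2
    ring
  have hnormalised (s : ℝ) : (Real.exp (s * sellingWeight α β γ ε) : ℂ) *
      secondOrder (sellingPoint α β γ s) ε = (∑' n, Real.exp (-(s * E n)) : ℝ) := by
    simp only [secondOrder, Complex.ofReal_tsum, ← hterm, tsum_mul_left]
    rfl
  have hsum : Summable fun n => Real.exp (-E n) := by
    have hmem : (2 : ℂ) • sellingPoint α β γ 1 ∈ SiegelH2 := by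
      simpa using smul_mem_SiegelH2 (sellingPoint_mem hα hβ hγ one_pos) two_pos
    have hnorm := ((summable_norm_thetaTerm hmem (zeroOneLift ε, ![0, 0])).of_norm.mul_left
      (Real.exp (1 * sellingWeight α β γ ε) : ℂ)).norm
    simp only [hterm, Complex.norm_real, Real.norm_eq_abs, Real.abs_exp] at hnorm
    simpa only [one_mul] using hnorm
  obtain ⟨n₀, hn₀⟩ := exists_sellingForm_eq_sellingWeight α β γ ε
  refine ⟨(Nat.card {n // E n = 0} : ℝ), ?_, ?_⟩
  · exact_mod_cast (card_zeros_pos hsum (sub_eq_zero.2 hn₀)).ne'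
  · simp only [hnormalised]
    exact (Complex.continuous_ofReal.tendsto _).comp (tendsto_tsum_exp_neg_mul hE hsum)

end Degeneration

section AlgebraicIndependence

open Filter Topology MvPolynomial

lemma tendsto_exp_mul_zero_of_lt {g : ℝ → ℂ} {c : ℂ} {u v : ℝ} (huv : u < v)
    (hg : Tendsto (fun s : ℝ => (Real.exp (s * v) : ℂ) * g s) atTop (𝓝 c)) :
    Tendsto (fun s : ℝ => (Real.exp (s * u) : ℂ) * g s) atTop (𝓝 0) := by
  have hdecay : Tendsto (fun s : ℝ => (Real.exp (-(s * (v - u))) : ℂ)) atTop (𝓝 0) := by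
    exact_mod_cast (Complex.continuous_ofReal.tendsto _).comp
      (Real.tendsto_exp_neg_atTop_nhds_zero.comp (tendsto_id.atTop_mul_const (sub_pos.2 huv)))
  have hlim := hdecay.mul hg
  rw [zero_mul] at hlim
  refine hlim.congr fun s => ?_
  rw [← mul_assoc, ← Complex.ofReal_mul, ← Real.exp_add]
  ring_nf

lemma tendsto_exp_mul_prod_pow {σ : Type*} [Fintype σ] {w : σ → ℝ} {f : ℝ → σ → ℂ} {c : σ → ℂ}
    (hf : ∀ i, Tendsto (fun s : ℝ => (Real.exp (s * w i) : ℂ) * f s i) atTop (𝓝 (c i)))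
    (m : σ →₀ ℕ) :
    Tendsto (fun s : ℝ => (Real.exp (s * ∑ i, m i * w i) : ℂ) * ∏ i, f s i ^ m i) atTop
      (𝓝 (∏ i, c i ^ m i)) := by
  refine (tendsto_finsetProd _ fun i _ => (hf i).pow (m i)).congr fun s => ?_
  simp only [mul_pow, Finset.prod_mul_distrib, ← Complex.ofReal_pow, ← Complex.ofReal_prod,
    ← Real.exp_nat_mul, ← Real.exp_sum, Finset.mul_sum, mul_left_comm]

lemma eq_zero_of_eventually_eval_eq_zero {σ : Type*} [Fintype σ] {G : MvPolynomial σ ℂ}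
    {w : σ → ℝ} {f : ℝ → σ → ℂ} {c : σ → ℂ} (hc : ∀ i, c i ≠ 0)
    (hf : ∀ i, Tendsto (fun s : ℝ => (Real.exp (s * w i) : ℂ) * f s i) atTop (𝓝 (c i)))
    (hw : Set.InjOn (fun m : σ →₀ ℕ => ∑ i, m i * w i) G.support)
    (hG : ∀ᶠ s in atTop, eval (f s) G = 0) : G = 0 := by
  by_contra hG₀
  -- The monomial of least weight dominates all others as `s → ∞`.
  obtain ⟨m₀, hm₀, hmin⟩ := G.support.exists_min_image (fun m => ∑ i, m i * w i)
    (support_nonempty.2 hG₀)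
  have hmonomial (m) (hm : m ∈ G.support) :
      Tendsto (fun s : ℝ => (Real.exp (s * ∑ i, m₀ i * w i) : ℂ) * ∏ i, f s i ^ m i) atTop
        (𝓝 (if m = m₀ then ∏ i, c i ^ m₀ i else 0)) := by
    split_ifs with h
    · rw [h]
      exact tendsto_exp_mul_prod_pow hf m₀
    · have hlt := (hmin m hm).lt_of_ne fun heq => h (hw hm hm₀ heq.symm)
      exact tendsto_exp_mul_zero_of_lt hlt (tendsto_exp_mul_prod_pow hf m)
  have hlead : Tendsto (fun s : ℝ => (Real.exp (s * ∑ i, m₀ i * w i) : ℂ) * eval (f s) G) atTop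
      (𝓝 (coeff m₀ G * ∏ i, c i ^ m₀ i)) := by
    have hsum := tendsto_finsetSum G.support fun m hm =>
      (hmonomial m hm).const_mul (coeff m G)
    simp only [mul_ite, mul_zero, Finset.sum_ite_eq', hm₀, if_true] at hsum
    simpa only [eval_eq', Finset.mul_sum, mul_left_comm] using hsum
  have hzero : coeff m₀ G * ∏ i, c i ^ m₀ i = 0 :=
    tendsto_nhds_unique (hlead.congr' (hG.mono fun s hs => by rw [hs, mul_zero]))
      tendsto_const_nhds
  exact mul_ne_zero (mem_support_iff.1 hm₀)
    (Finset.prod_ne_zero_iff.2 fun i _ => pow_ne_zero _ (hc i)) hzero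

lemma sum_fin_two_arrow_zmod_two {M : Type*} [AddCommMonoid M] (F : (Fin 2 → ZMod 2) → M) :
    ∑ ε, F ε = (F ![0, 0] + F ![0, 1]) + (F ![1, 0] + F ![1, 1]) := by
  have hpair (f : ZMod 2 → M) : ∑ x, f x = f 0 + f 1 := Fin.sum_univ_two f
  rw [← (finTwoArrowEquiv (ZMod 2)).symm.sum_comp, Fintype.sum_prod_type]
  simp only [hpair]
  rfl

lemma sum_mul_sellingWeight_eq_ofDigits (b : ℕ) (m : (Fin 2 → ZMod 2) →₀ ℕ) :
    ∑ ε, m ε * sellingWeight 1 b (b ^ 2) ε =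
      (Nat.ofDigits b [m ![1, 0] + m ![1, 1], m ![0, 1] + m ![1, 1], m ![0, 1] + m ![1, 0]] :) := by
  have hone : (1 : ZMod 2).val = 1 := rfl
  have htwo : (1 + 1 : ZMod 2).val = 0 := rfl
  simp only [sum_fin_two_arrow_zmod_two, sellingWeight, Matrix.cons_val, add_zero, zero_add, hone,
    htwo, ZMod.val_zero, Nat.ofDigits_cons, Nat.ofDigits_nil]
  push_cast
  ring

lemma injOn_sum_mul_sellingWeight {k b : ℕ} (hb : 1 < b) (hkb : k < b) :
    Set.InjOn (fun m : (Fin 2 → ZMod 2) →₀ ℕ => ∑ ε, m ε * sellingWeight 1 b (b ^ 2) ε)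
      {m | m.degree = k} := by
  intro m hm m' hm' h
  simp only [sum_mul_sellingWeight_eq_ofDigits, Nat.cast_inj] at h
  simp only [Set.mem_ofPred_eq, Finsupp.degree_eq_sum, sum_fin_two_arrow_zmod_two] at hm hm'
  have hlt {m : (Fin 2 → ZMod 2) →₀ ℕ}
      (hm : m ![0, 0] + m ![0, 1] + (m ![1, 0] + m ![1, 1]) = k) :
      ∀ l ∈ [m ![1, 0] + m ![1, 1], m ![0, 1] + m ![1, 1], m ![0, 1] + m ![1, 0]], l < b := by
    simp only [List.forall_mem_cons]
    exact ⟨by omega, by omega, by omega, List.forall_mem_nil _⟩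
  have hdigits := Nat.ofDigits_inj_of_len_eq hb (by simp) (hlt hm) (hlt hm') h
  simp only [List.cons.injEq] at hdigits
  have hresidue : ∀ ε : Fin 2 → ZMod 2, ε = ![0, 0] ∨ ε = ![0, 1] ∨ ε = ![1, 0] ∨ ε = ![1, 1] := by
    decide
  ext ε
  rcases hresidue ε with rfl | rfl | rfl | rfl <;> omega

theorem eq_zero_of_eval_secondOrder_eq_zero {k : ℕ} {G : MvPolynomial (Fin 2 → ZMod 2) ℂ}
    (hG : G.IsHomogeneous k) (hzero : ∀ τ ∈ SiegelH2, eval (secondOrder τ) G = 0) : G = 0 := by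
  have hb : (0 : ℝ) < (k + 2 : ℕ) := by positivity
  choose c hc hlim using exists_tendsto_secondOrder_sellingPoint one_pos hb (pow_pos hb 2)
  refine eq_zero_of_eventually_eval_eq_zero hc hlim
    ((injOn_sum_mul_sellingWeight (k := k) (by omega) (by omega)).mono fun m hm =>
      (hG.degree_eq_sum_deg_support hm).symm) ?_
  filter_upwards [eventually_gt_atTop 0] with s hs
  exact hzero _ (sellingPoint_mem one_pos hb (pow_pos hb 2) hs)

end AlgebraicIndependence

section GradientIndependence

open MvPolynomial

/-- The values of the ten even `θ²[δ]` when the second-order theta constants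
`Θ[00], Θ[01], Θ[10], Θ[11]` take the values `a, b, c, e`. -/
def evenThetaSq (a b c e : ℂ) : Fin 10 → ℂ :=
  ![a ^ 2 + b ^ 2 + c ^ 2 + e ^ 2, a ^ 2 - b ^ 2 + c ^ 2 - e ^ 2, a ^ 2 + b ^ 2 - c ^ 2 - e ^ 2,
    a ^ 2 - b ^ 2 - c ^ 2 + e ^ 2, 2 * (a * b + c * e), 2 * (a * b - c * e), 2 * (a * c + b * e),
    2 * (a * c - b * e), 2 * (a * e + b * c), 2 * (a * e - b * c)]

lemma eval_thetaSqPoly_δev (x : (Fin 2 → ZMod 2) → ℂ) (d : Fin 10) :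
    eval x (thetaSqPoly (δev d)) =
      evenThetaSq (x ![0, 0]) (x ![0, 1]) (x ![1, 0]) (x ![1, 1]) d := by
  have hone : (1 : ZMod 2).val = 1 := rfl
  have htwo : (1 + 1 : ZMod 2) = 0 := rfl
  have hadd (a b : ℤ) (u v : ZMod 2) :
      (fun i => ((![a, b] i : ℤ) : ZMod 2) + ![u, v] i) = ![a + u, b + v] := by
    ext i
    fin_cases i <;> rfl
  simp only [thetaSqPoly, sum_fin_two_arrow_zmod_two, zeroOneLift, Fin.sum_univ_two]
  fin_cases d <;> simp [δev, evenThetaSq, hadd, hone, htwo] <;> ring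

/-- `48` times the gradient of the Igusa quartic at the values `θ⁸[δ]` taken when the second-order
theta constants are `a, b, c, e`. -/
def igusaGradientAt (a b c e : ℂ) : Fin 10 → ℂ :=
  igusaGradient fun d => evenThetaSq a b c e d ^ 2

/-- `g` is the coefficient vector of a linear relation between the values of the gradient of the
Igusa quartic, at all values of the second-order theta constants. -/
def IsGradientRelation (g : Fin 10 → ℂ) : Prop :=
  ∀ a b c e, ∑ d, g d * igusaGradientAt a b c e d = 0

lemma isGradientRelation_of_sum_smul_gradientPoly {g : Fin 10 → ℂ}
    (hg : ∑ d, g d • gradientPoly d = 0) : IsGradientRelation g := by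
  intro a b c e
  let x : (Fin 2 → ZMod 2) → ℂ := fun ε => ![![a, b], ![c, e]] (ε 0) (ε 1)
  have hx (d : Fin 10) : eval x (gradientPoly d) = igusaGradientAt a b c e d := by
    simp only [gradientPoly, map_igusaGradient, map_pow, eval_thetaSqPoly_δev]
    rfl
  simpa only [map_sum, smul_eval, map_zero, hx] using congrArg (eval x) hg

lemma sum_univ_fin_ten {M : Type*} [AddCommMonoid M] (f : Fin 10 → M) :
    ∑ i, f i = f 0 + f 1 + f 2 + f 3 + f 4 + f 5 + f 6 + f 7 + f 8 + f 9 := by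
  rw [Fin.sum_univ_castSucc, Fin.sum_univ_castSucc, Fin.sum_univ_eight]
  rfl

namespace IsGradientRelation

variable {g : Fin 10 → ℂ}

-- At these points two of the four second-order theta constants vanish, as they do at the boundary
-- of the Siegel space.
lemma pair_sums (hg : IsGradientRelation g) :
    g 4 + g 5 = g 0 - g 1 + g 2 - g 3 ∧ g 6 + g 7 = g 0 + g 1 - g 2 - g 3 ∧
      g 8 + g 9 = g 0 - g 1 - g 2 + g 3 := by
  simp only [IsGradientRelation, sum_univ_fin_ten, igusaGradientAt, igusaGradient, evenThetaSq,
    Matrix.cons_val] at hg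
  refine ⟨?_, ?_, ?_⟩
  · linear_combination hg 1 2 0 0 / 14400
  · linear_combination hg 1 0 2 0 / 14400
  · linear_combination hg 1 0 0 2 / 14400

lemma pair_differences (hg : IsGradientRelation g) :
    g 4 - g 5 = g 6 - g 7 ∧ g 6 - g 7 = g 8 - g 9 := by
  obtain ⟨h₄₅, h₆₇, h₈₉⟩ := hg.pair_sums
  simp only [IsGradientRelation, sum_univ_fin_ten, igusaGradientAt, igusaGradient, evenThetaSq,
    Matrix.cons_val] at hg
  have h₁ : 2 * (g 4 - g 5) = (g 6 - g 7) + (g 8 - g 9) := by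
    linear_combination h₆₇ + h₈₉ - hg 1 1 2 2 / 460800
  have h₂ : 2 * (g 6 - g 7) = (g 4 - g 5) + (g 8 - g 9) := by
    linear_combination h₄₅ + h₈₉ - hg 1 2 1 2 / 460800
  constructor
  · linear_combination (h₁ - h₂) / 3
  · linear_combination (h₁ + 2 * h₂) / 3

lemma first_four_eq_zero (hg : IsGradientRelation g) :
    g 0 = 0 ∧ g 1 = 0 ∧ g 2 = 0 ∧ g 3 = 0 := by
  obtain ⟨h₄₅, h₆₇, h₈₉⟩ := hg.pair_sums
  simp only [IsGradientRelation, sum_univ_fin_ten, igusaGradientAt, igusaGradient, evenThetaSq,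
    Matrix.cons_val] at hg
  have h₀ : g 0 = 3 * (g 1 + g 2 + g 3) := by
    linear_combination (hg 1 0 1 1 / 16 - 29 * (h₄₅ + h₆₇ + h₈₉)) / 6
  have h₁ : 3 * g 1 = -(g 1 + g 2 + g 3) := by
    linear_combination -(hg 1 0 1 2 / 1024 - 29 * (h₄₅ + h₈₉) - 11 * h₆₇ + 12 * h₀) / 18
  have h₂ : 3 * g 2 = -(g 1 + g 2 + g 3) := by
    linear_combination -(hg 1 1 0 2 / 1024 - 11 * h₄₅ - 29 * (h₆₇ + h₈₉) + 12 * h₀) / 18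
  have h₃ : 3 * g 3 = -(g 1 + g 2 + g 3) := by
    linear_combination -(hg 1 0 2 1 / 1024 - 29 * (h₄₅ + h₆₇) - 11 * h₈₉ + 12 * h₀) / 18
  have hsum : g 1 + g 2 + g 3 = 0 := by linear_combination (h₁ + h₂ + h₃) / 6
  rw [hsum] at h₀ h₁ h₂ h₃
  refine ⟨?_, ?_, ?_, ?_⟩
  · linear_combination h₀
  · linear_combination h₁ / 3
  · linear_combination h₂ / 3
  · linear_combination h₃ / 3

lemma eq_zero (hg : IsGradientRelation g) : g = 0 := by
  obtain ⟨h₀, h₁, h₂, h₃⟩ := hg.first_four_eq_zero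
  obtain ⟨h₄₅, h₆₇, h₈₉⟩ := hg.pair_sums
  obtain ⟨h₄₆, h₆₈⟩ := hg.pair_differences
  simp only [h₀, h₁, h₂, h₃, add_zero, sub_zero] at h₄₅ h₆₇ h₈₉
  have h₅ : g 5 = -g 4 := by linear_combination h₄₅
  have h₆ : g 6 = g 4 := by linear_combination (h₆₇ - h₄₅ - h₄₆) / 2
  have h₇ : g 7 = -g 4 := by linear_combination h₆₇ - h₆
  have h₈ : g 8 = g 4 := by linear_combination (h₈₉ - h₆₇ - h₆₈) / 2 + h₆
  have h₉ : g 9 = -g 4 := by linear_combination h₈₉ - h₈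
  have h₄ : g 4 = 0 := by
    simp only [IsGradientRelation, sum_univ_fin_ten, igusaGradientAt, igusaGradient, evenThetaSq,
      Matrix.cons_val, h₀, h₁, h₂, h₃, h₅, h₆, h₇, h₈, h₉] at hg
    linear_combination hg 1 1 1 2 / 72576
  rw [h₄] at h₅ h₆ h₇ h₈ h₉
  ext d
  fin_cases d <;> simp [h₀, h₁, h₂, h₃, h₄, h₅, h₆, h₇, h₈, h₉]

end IsGradientRelation

theorem linearIndependent_gradientPoly : LinearIndependent ℂ gradientPoly :=
  Fintype.linearIndependent_iff.2 fun _ hg =>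
    congrFun (isGradientRelation_of_sum_smul_gradientPoly hg).eq_zero

theorem linearIndependent_Dd :
    LinearIndependent ℂ fun d : Fin 10 => fun τ : SiegelH2 => Dd d τ.1 := by
  refine Fintype.linearIndependent_iff.2 fun g hg => ?_
  refine Fintype.linearIndependent_iff.1 linearIndependent_gradientPoly g
    (eq_zero_of_eval_secondOrder_eq_zero (k := 12) ?_ fun τ hτ => ?_)
  · refine .sum _ _ _ fun d _ => ?_
    rw [smul_eq_C_mul]
    exact (isHomogeneous_gradientPoly d).C_mul _
  · have hDd : ∑ d, g d * Dd d τ = 0 := by simpa using congrFun hg ⟨τ, hτ⟩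
    simp only [map_sum, smul_eval, eval_secondOrder_gradientPoly hτ, mul_left_comm _ (48 : ℂ),
      ← Finset.mul_sum, hDd, mul_zero]

end GradientIndependence

/-- the ten functions `D_δ = ∂I₄/∂θ⁴[δ]` are linearly independent;
equivalently their span has dimension exactly 10. -/
theorem statement7 :
    LinearIndependent ℂ (fun d : Fin 10 => fun τ : SiegelH2 => Dd d τ.1) ∧
    Module.finrank ℂ ↥(Submodule.span ℂ
      (Set.range fun d : Fin 10 => fun τ : SiegelH2 => Dd d τ.1)) = 10 :=
  ⟨linearIndependent_Dd, by rw [finrank_span_eq_card linearIndependent_Dd, Fintype.card_fin]⟩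

end TwoLoop
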